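/- arXiv:1910.10976 — 2 statements merged into one kernel-verified Lean document; each statement's English description precedes it below -/
import Mathlib

section
/- Let S, J ⊆ {1,…,n} and let A ∈ ℝ^{m×n} satisfy the RIP of order |S ∪ J| with constant δ ∈ [0,1). Then for every x ∈ ℝ^n with supp(x) = S, one has (1 − δ)·‖x_{S\J}‖₂² ≤ ‖P_J^⊥ A x‖₂² ≤ (1 + δ)·‖x_{S\J}‖₂². -/
open Finset

noncomputable section

/-- The support of a vector as a `Finset`. -/
def vsupp {n : ℕ} (x : Fin n → ℝ) : Finset (Fin n) :=
  Finset.univ.filter (fun i => x i ≠ 0)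

/-- `A` satisfies the restricted isometry property of order `r` with constant `δ`. -/
def RIP {m n : ℕ} (A : Matrix (Fin m) (Fin n) ℝ) (r : ℕ) (δ : ℝ) : Prop :=
  ∀ x : Fin n → ℝ, (vsupp x).card ≤ r →
    (1 - δ) * (∑ i, x i ^ 2) ≤ (∑ i, (A.mulVec x) i ^ 2) ∧
      (∑ i, (A.mulVec x) i ^ 2) ≤ (1 + δ) * (∑ i, x i ^ 2)

/-- The `j`-th column of `A`. -/
def col {m n : ℕ} (A : Matrix (Fin m) (Fin n) ℝ) (j : Fin n) : Fin m → ℝ :=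
  fun i => A i j

/-- Euclidean dot product. -/
def dot {m : ℕ} (u v : Fin m → ℝ) : ℝ := ∑ i, u i * v i

/-- Squared Euclidean norm. -/
def nsq {m : ℕ} (v : Fin m → ℝ) : ℝ := ∑ i, v i ^ 2

/-- Euclidean norm. -/
def enorm {m : ℕ} (v : Fin m → ℝ) : ℝ := Real.sqrt (nsq v)

/-- Squared norm of the restriction of `x` to `T`. -/
def rsq {n : ℕ} (x : Fin n → ℝ) (T : Finset (Fin n)) : ℝ := ∑ i ∈ T, x i ^ 2

/-- Norm of the restriction of `x` to `T`. -/
def rnorm {n : ℕ} (x : Fin n → ℝ) (T : Finset (Fin n)) : ℝ := Real.sqrt (rsq x T)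

/-- Span of the columns of `A` indexed by `J`. -/
def colSpan {m n : ℕ} (A : Matrix (Fin m) (Fin n) ℝ) (J : Finset (Fin n)) :
    Submodule ℝ (EuclideanSpace ℝ (Fin m)) :=
  Submodule.span ℝ ((fun j => (WithLp.equiv 2 (Fin m → ℝ)).symm (col A j)) '' (J : Set (Fin n)))

/-- The projection `P_J^⊥ v` of `v` onto the orthogonal complement of the span of the
columns of `A` indexed by `J`. -/
def projPerp {m n : ℕ} (A : Matrix (Fin m) (Fin n) ℝ) (J : Finset (Fin n)) (v : Fin m → ℝ) :
    Fin m → ℝ :=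
  v - WithLp.equiv 2 (Fin m → ℝ)
    ((Submodule.orthogonalProjectionOnto (colSpan A J) ((WithLp.equiv 2 (Fin m → ℝ)).symm v) :
      EuclideanSpace ℝ (Fin m)))

/-- The OLS selection criterion value for index `j`, given measurements `y` and current
estimated support `Sk`. -/
def olsQuot {m n : ℕ} (A : Matrix (Fin m) (Fin n) ℝ) (y : Fin m → ℝ) (Sk : Finset (Fin n))
    (j : Fin n) : ℝ :=
  |dot (projPerp A Sk y) (col A j)| / _root_.enorm (projPerp A Sk (col A j))

/-- The estimated support of OLS after `k` iterations (ties broken towards smaller index). -/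
def olsSupp {m n : ℕ} (A : Matrix (Fin m) (Fin n) ℝ) (y : Fin m → ℝ) : ℕ → Finset (Fin n)
  | 0 => ∅
  | k + 1 =>
    let Sk := olsSupp A y k
    let cand := (Finset.univ \ Sk).filter
      (fun j => ∀ i ∈ Finset.univ \ Sk, olsQuot A y Sk i ≤ olsQuot A y Sk j)
    if h : cand.Nonempty then insert (cand.min' h) Sk else Sk

/-- The constant `C_K` from the paper. -/
def CK (K : ℕ) : ℝ :=
  if K = 1 then 1 else if K = 2 then 2/3 else if K = 3 then 4/7 else 1 / Real.sqrt K

/-!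
The vector `P_J^⊥ A x` is `A (x - c)` for some `c` supported on `J`, and by minimality of the
orthogonal projection its norm is the least among all such `A (x - c)`. Every `x - c` agrees with
`x` off `J`, which gives the lower bound; the choice `c = x_J`, for which `x - c = x_{S \ J}`,
gives the upper bound.
-/

theorem norm_sub_starProjection_le {𝕜 E : Type*} [RCLike 𝕜] [NormedAddCommGroup E]
    [InnerProductSpace 𝕜 E] {K : Submodule 𝕜 E} [K.HasOrthogonalProjection] (v : E) {w : E}
    (hw : w ∈ K) : ‖v - K.starProjection v‖ ≤ ‖v - w‖ := by
  have bddBelow_dist : BddBelow (Set.range fun u : K => ‖v - u‖) :=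
    ⟨0, Set.forall_mem_range.2 fun _ => norm_nonneg _⟩
  rw [Submodule.starProjection_minimal]
  exact ciInf_le bddBelow_dist ⟨w, hw⟩

section Vectors

variable {n : ℕ}

theorem nsq_nonneg (x : Fin n → ℝ) : 0 ≤ nsq x :=
  sum_nonneg fun _ _ => sq_nonneg _

theorem rsq_nonneg (x : Fin n → ℝ) (T : Finset (Fin n)) : 0 ≤ rsq x T :=
  sum_nonneg fun _ _ => sq_nonneg _

theorem nsq_eq_norm_toLp_sq (x : Fin n → ℝ) : nsq x = ‖WithLp.toLp 2 x‖ ^ 2 :=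
  (EuclideanSpace.real_norm_sq_eq _).symm

theorem mem_vsupp {x : Fin n → ℝ} {i : Fin n} : i ∈ vsupp x ↔ x i ≠ 0 :=
  mem_filter_univ i

theorem vsupp_subset_iff {x : Fin n → ℝ} {T : Finset (Fin n)} :
    vsupp x ⊆ T ↔ ∀ i ∉ T, x i = 0 :=
  forall_congr' fun _ => by rw [mem_vsupp, not_imp_comm]

theorem vsupp_sub_subset (x c : Fin n → ℝ) : vsupp (x - c) ⊆ vsupp x ∪ vsupp c := by
  intro i hi
  simp only [mem_union, mem_vsupp, Pi.sub_apply] at hi ⊢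
  contrapose! hi
  rw [hi.1, hi.2, sub_zero]

theorem vsupp_indicator_subset (x : Fin n → ℝ) (T : Finset (Fin n)) :
    vsupp (Set.indicator T x) ⊆ T :=
  vsupp_subset_iff.2 fun _ hi => Set.indicator_of_notMem (mod_cast hi) x

theorem vsupp_sub_indicator (x : Fin n → ℝ) (T : Finset (Fin n)) :
    vsupp (x - Set.indicator T x) = vsupp x \ T := by
  ext i
  by_cases hi : i ∈ T <;> simp [mem_vsupp, hi]

theorem rsq_sdiff_le_nsq_sub (x : Fin n → ℝ) {c : Fin n → ℝ} (T : Finset (Fin n))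
    {J : Finset (Fin n)} (hc : vsupp c ⊆ J) : rsq x (T \ J) ≤ nsq (x - c) := by
  have eq_off_J : ∀ i ∈ T \ J, x i ^ 2 = (x - c) i ^ 2 := fun i hi => by
    rw [Pi.sub_apply, vsupp_subset_iff.1 hc i (mem_sdiff.1 hi).2, sub_zero]
  calc rsq x (T \ J) = ∑ i ∈ T \ J, (x - c) i ^ 2 := sum_congr rfl eq_off_J
    _ ≤ nsq (x - c) := sum_le_univ_sum_of_nonneg fun _ => sq_nonneg _

theorem nsq_sub_indicator (x : Fin n → ℝ) (J : Finset (Fin n)) :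
    nsq (x - Set.indicator J x) = rsq x (vsupp x \ J) := by
  have nsq_eq_rsq_vsupp (z : Fin n → ℝ) : nsq z = rsq z (vsupp z) :=
    (sum_subset (subset_univ _) fun i _ hi => by simpa [mem_vsupp] using hi).symm
  rw [nsq_eq_rsq_vsupp, vsupp_sub_indicator]
  refine sum_congr rfl fun i hi => ?_
  simp [(mem_sdiff.1 hi).2]

end Vectors

section Projection

variable {m n : ℕ} {A : Matrix (Fin m) (Fin n) ℝ} {J : Finset (Fin n)} {x : Fin n → ℝ}

theorem toLp_mulVec_eq_sum_col (A : Matrix (Fin m) (Fin n) ℝ) (x : Fin n → ℝ) :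
    WithLp.toLp 2 (A.mulVec x) = ∑ j, x j • WithLp.toLp 2 (col A j) := by
  ext i
  simp [Matrix.mulVec, dotProduct, col, mul_comm]

theorem mem_colSpan_iff {u : EuclideanSpace ℝ (Fin m)} :
    u ∈ colSpan A J ↔ ∃ c : Fin n → ℝ, vsupp c ⊆ J ∧ WithLp.toLp 2 (A.mulVec c) = u := by
  have sum_eq_sum_of_vsupp_subset {c : Fin n → ℝ} (hc : vsupp c ⊆ J) :
      ∑ j ∈ J, c j • WithLp.toLp 2 (col A j) = WithLp.toLp 2 (A.mulVec c) := by
    rw [toLp_mulVec_eq_sum_col]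
    refine sum_subset (subset_univ J) fun j _ hj => ?_
    rw [vsupp_subset_iff.1 hc j hj, zero_smul]
  rw [colSpan, Submodule.mem_span_image_finset_iff_exists_fun']
  constructor
  · rintro ⟨c, rfl⟩
    refine ⟨Set.indicator J c, vsupp_indicator_subset c J, ?_⟩
    rw [← sum_eq_sum_of_vsupp_subset (vsupp_indicator_subset c J)]
    refine sum_congr rfl fun j hj => ?_
    rw [Set.indicator_of_mem (mod_cast hj)]
    rfl
  · rintro ⟨c, hc, rfl⟩
    exact ⟨c, sum_eq_sum_of_vsupp_subset hc⟩

theorem toLp_projPerp (A : Matrix (Fin m) (Fin n) ℝ) (J : Finset (Fin n)) (v : Fin m → ℝ) :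
    WithLp.toLp 2 (projPerp A J v) =
      WithLp.toLp 2 v - (colSpan A J).starProjection (WithLp.toLp 2 v) :=
  rfl

theorem exists_projPerp_mulVec_eq (A : Matrix (Fin m) (Fin n) ℝ) (J : Finset (Fin n))
    (x : Fin n → ℝ) :
    ∃ c, vsupp c ⊆ J ∧ projPerp A J (A.mulVec x) = A.mulVec (x - c) := by
  obtain ⟨c, hcJ, hc⟩ := mem_colSpan_iff.1 <|
    (colSpan A J).starProjection_apply_mem (WithLp.toLp 2 (A.mulVec x))
  refine ⟨c, hcJ, WithLp.toLp_injective 2 ?_⟩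
  rw [toLp_projPerp, ← hc, Matrix.mulVec_sub, WithLp.toLp_sub]

theorem nsq_projPerp_mulVec_le (A : Matrix (Fin m) (Fin n) ℝ) (x : Fin n → ℝ) {c : Fin n → ℝ}
    (hc : vsupp c ⊆ J) : nsq (projPerp A J (A.mulVec x)) ≤ nsq (A.mulVec (x - c)) := by
  rw [nsq_eq_norm_toLp_sq, nsq_eq_norm_toLp_sq, toLp_projPerp, Matrix.mulVec_sub, WithLp.toLp_sub]
  gcongr
  exact norm_sub_starProjection_le _ (mem_colSpan_iff.2 ⟨c, hc, rfl⟩)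

theorem mul_rsq_sdiff_le_nsq_projPerp_mulVec {α : ℝ}
    (hA : ∀ z, vsupp z ⊆ vsupp x ∪ J → α * nsq z ≤ nsq (A.mulVec z)) :
    α * rsq x (vsupp x \ J) ≤ nsq (projPerp A J (A.mulVec x)) := by
  obtain hα | hα := le_total α 0
  · exact (mul_nonpos_of_nonpos_of_nonneg hα (rsq_nonneg _ _)).trans (nsq_nonneg _)
  obtain ⟨c, hcJ, hc⟩ := exists_projPerp_mulVec_eq A J x
  calc α * rsq x (vsupp x \ J) ≤ α * nsq (x - c) := by
        gcongr
        exact rsq_sdiff_le_nsq_sub x _ hcJ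
    _ ≤ nsq (A.mulVec (x - c)) :=
        hA _ <| (vsupp_sub_subset x c).trans (union_subset_union_right hcJ)
    _ = nsq (projPerp A J (A.mulVec x)) := by rw [hc]

theorem nsq_projPerp_mulVec_le_mul_rsq_sdiff {β : ℝ}
    (hA : ∀ z, vsupp z ⊆ vsupp x \ J → nsq (A.mulVec z) ≤ β * nsq z) :
    nsq (projPerp A J (A.mulVec x)) ≤ β * rsq x (vsupp x \ J) :=
  calc nsq (projPerp A J (A.mulVec x)) ≤ nsq (A.mulVec (x - Set.indicator J x)) :=
        nsq_projPerp_mulVec_le A x (vsupp_indicator_subset x J)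
    _ ≤ β * nsq (x - Set.indicator J x) := hA _ (vsupp_sub_indicator x J).subset
    _ = β * rsq x (vsupp x \ J) := by rw [nsq_sub_indicator]

end Projection

theorem stmt0_general {m n : ℕ} (A : Matrix (Fin m) (Fin n) ℝ) (J : Finset (Fin n)) (α β : ℝ)
    (x : Fin n → ℝ)
    (hlower : ∀ z, vsupp z ⊆ vsupp x ∪ J → α * nsq z ≤ nsq (A.mulVec z))
    (hupper : ∀ z, vsupp z ⊆ vsupp x \ J → nsq (A.mulVec z) ≤ β * nsq z) :
    α * rsq x (vsupp x \ J) ≤ nsq (projPerp A J (A.mulVec x)) ∧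
      nsq (projPerp A J (A.mulVec x)) ≤ β * rsq x (vsupp x \ J) :=
  ⟨mul_rsq_sdiff_le_nsq_projPerp_mulVec hlower, nsq_projPerp_mulVec_le_mul_rsq_sdiff hupper⟩

/-- modified RIP of a projected matrix: if `A` satisfies the RIP of order
`|S ∪ J|` with constant `δ ∈ [0,1)`, then for every `x` with support `S`,
`(1 − δ)‖x_{S\J}‖₂² ≤ ‖P_J^⊥ A x‖₂² ≤ (1 + δ)‖x_{S\J}‖₂²`. -/
theorem stmt0 {m n : ℕ} (A : Matrix (Fin m) (Fin n) ℝ) (S J : Finset (Fin n)) (δ : ℝ)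
    (hδ0 : 0 ≤ δ) (hδ1 : δ < 1) (hRIP : RIP A (S ∪ J).card δ)
    (x : Fin n → ℝ) (hx : vsupp x = S) :
    (1 - δ) * rsq x (S \ J) ≤ nsq (projPerp A J (A.mulVec x)) ∧
      nsq (projPerp A J (A.mulVec x)) ≤ (1 + δ) * rsq x (S \ J) := by
  subst hx
  exact stmt0_general A J _ _ x (fun z hz => (hRIP z (card_le_card hz)).1) fun z hz =>
    (hRIP z (card_le_card (hz.trans (sdiff_subset.trans subset_union_left)))).2
end
end

section
/- Fix an integer K ≥ 1. Let x ∈ ℝ^{K+1} be the vector with x_1 = 0 and x_i = 1 for 2 ≤ i ≤ K+1, and let A ∈ ℝ^{(K+1)×(K+1)} be the matrix whose first column is (√((K−1)/K), 1/K, 1/K, …, 1/K)ᵀ and whose j-th column for 2 ≤ j ≤ K+1 is the standard basis vector e_j. Then: (a) every column of A has unit ℓ₂-norm; (b) A x = x; and (c) |⟨A x, a_1⟩| = 1 = (1/√K) · ‖A x‖₂² / ‖x‖₂. In particular, the bound max_{j ∉ supp(x)} |⟨r⁰, a_j⟩| / ‖P_∅^⊥ a_j‖₂ ≤ δ_{K+1}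 ‖r⁰‖₂² / ‖x‖₂ with r⁰ = A x and δ_{K+1} = 1/√K is attained with equality for this pair (A, x). -/
open Finset

noncomputable section

/-!
`A` differs from the identity only in its first column, where `x` vanishes, so `A x = x`. The first
index is the only one outside the support of `x`, hence the maximum in the bound is the single
number `⟨x, a₁⟩ = K · (1 / K) = 1`, while `‖x‖₂² = K` makes the right-hand side
`(1 / √K) · ‖x‖₂ = 1`.
-/

section Vectors

variable {m n : ℕ}

theorem notMem_vsupp {x : Fin n → ℝ} {i : Fin n} : i ∉ vsupp x ↔ x i = 0 := by
  simp [vsupp]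

theorem nsq_single (i : Fin m) (a : ℝ) : nsq (Pi.single i a) = a ^ 2 := by
  simp [nsq, Pi.single_apply, ite_pow]

theorem nsq_const (b : ℝ) : nsq (fun _ : Fin m => b) = m * b ^ 2 := by
  simp [nsq]

theorem nsq_cons (a : ℝ) (v : Fin m → ℝ) :
    nsq (Fin.cons a v : Fin (m + 1) → ℝ) = a ^ 2 + nsq v := by
  simp [nsq, Fin.sum_univ_succ]

theorem dot_const (a b : ℝ) : dot (fun _ : Fin m => a) (fun _ => b) = m * (a * b) := by
  simp [dot]

theorem dot_cons (a b : ℝ) (u v : Fin m → ℝ) :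
    dot (Fin.cons a u : Fin (m + 1) → ℝ) (Fin.cons b v) = a * b + dot u v := by
  simp [dot, Fin.sum_univ_succ]

theorem nsq_div_enorm (v : Fin m → ℝ) : nsq v / _root_.enorm v = _root_.enorm v :=
  Real.div_sqrt

end Vectors

section Columns

variable {m n : ℕ}

theorem col_updateCol_self (A : Matrix (Fin m) (Fin n) ℝ) (j : Fin n) (v : Fin m → ℝ) :
    col (A.updateCol j v) j = v :=
  funext fun _ => Matrix.updateCol_self

theorem col_updateCol_of_ne (A : Matrix (Fin m) (Fin n) ℝ) {j k : Fin n} (h : k ≠ j)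
    (v : Fin m → ℝ) : col (A.updateCol j v) k = col A k :=
  funext fun _ => Matrix.updateCol_ne h

theorem col_one (j : Fin n) : col (1 : Matrix (Fin n) (Fin n) ℝ) j = Pi.single j 1 := by
  ext i
  simp [col, Matrix.one_apply, Pi.single_apply]

theorem updateCol_mulVec_of_eq_zero (A : Matrix (Fin m) (Fin n) ℝ) {j : Fin n} (v : Fin m → ℝ)
    {x : Fin n → ℝ} (hx : x j = 0) : (A.updateCol j v).mulVec x = A.mulVec x := by
  ext i
  simp only [Matrix.mulVec, dotProduct]
  refine Finset.sum_congr rfl fun k _ => ?_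
  rcases eq_or_ne k j with rfl | hk
  · simp only [hx, mul_zero]
  · rw [Matrix.updateCol_ne hk]

end Columns

section Projection

variable {m n : ℕ} (A : Matrix (Fin m) (Fin n) ℝ)

theorem colSpan_empty : colSpan A ∅ = ⊥ := by
  simp [colSpan]

theorem projPerp_eq_self_iff {J : Finset (Fin n)} {v : Fin m → ℝ} :
    projPerp A J v = v ↔ WithLp.toLp 2 v ∈ (colSpan A J)ᗮ := by
  simp [projPerp, Submodule.starProjection_apply_eq_zero_iff]

theorem projPerp_empty (v : Fin m → ℝ) : projPerp A ∅ v = v := by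
  simp [projPerp_eq_self_iff, colSpan_empty]

theorem abs_dot_div_enorm_projPerp_empty (y : Fin m → ℝ) {j : Fin n} (hj : nsq (col A j) = 1) :
    |dot y (col A j)| / _root_.enorm (projPerp A ∅ (col A j)) = |dot y (col A j)| := by
  rw [projPerp_empty, _root_.enorm, hj, Real.sqrt_one, div_one]

end Projection

section TightExample

variable {K : ℕ}

/-- The `K`-sparse signal `x = (0, 1, …, 1)` of the tightness example. -/
def tightSignal (K : ℕ) : Fin (K + 1) → ℝ :=
  Fin.cons 0 fun _ => 1

/-- The first column `(√((K - 1) / K), 1 / K, …, 1 / K)` of the matrix of the tightness example;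
its first entry is chosen so that it is a unit vector. -/
def tightColumn (K : ℕ) : Fin (K + 1) → ℝ :=
  Fin.cons (Real.sqrt (((K : ℝ) - 1) / K)) fun _ => 1 / K

/-- The matrix of the tightness example: the identity with its first column replaced by
`tightColumn K`. -/
def tightMatrix (K : ℕ) : Matrix (Fin (K + 1)) (Fin (K + 1)) ℝ :=
  (1 : Matrix (Fin (K + 1)) (Fin (K + 1)) ℝ).updateCol 0 (tightColumn K)

theorem tightSignal_apply (i : Fin (K + 1)) : tightSignal K i = if i = 0 then 0 else 1 := by
  cases i using Fin.cases <;> simp [tightSignal]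

theorem tightMatrix_apply (i j : Fin (K + 1)) :
    tightMatrix K i j =
      if j = 0 then (if i = 0 then Real.sqrt (((K : ℝ) - 1) / K) else 1 / K)
      else if i = j then 1 else 0 := by
  rw [tightMatrix, Matrix.updateCol_apply, Matrix.one_apply]
  cases i using Fin.cases <;> simp [tightColumn]

theorem notMem_vsupp_tightSignal {j : Fin (K + 1)} : j ∉ vsupp (tightSignal K) ↔ j = 0 := by
  simp [notMem_vsupp, tightSignal_apply]

theorem nsq_tightSignal : nsq (tightSignal K) = K := by
  simp [tightSignal, nsq_cons, nsq_const]

theorem nsq_tightColumn (hK : 1 ≤ K) : nsq (tightColumn K) = 1 := by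
  have one_le_K : (1 : ℝ) ≤ K := by exact_mod_cast hK
  have radicand_nonneg : 0 ≤ ((K : ℝ) - 1) / K := div_nonneg (by linarith) (by linarith)
  rw [tightColumn, nsq_cons, nsq_const, Real.sq_sqrt radicand_nonneg]
  field_simp
  ring

theorem dot_tightSignal_tightColumn (hK : 1 ≤ K) : dot (tightSignal K) (tightColumn K) = 1 := by
  have K_ne_zero : (K : ℝ) ≠ 0 := by positivity
  rw [tightSignal, tightColumn, dot_cons, dot_const, zero_mul, zero_add, one_mul,
    mul_one_div_cancel K_ne_zero]

theorem col_tightMatrix_zero : col (tightMatrix K) 0 = tightColumn K :=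
  col_updateCol_self _ _ _

theorem nsq_col_tightMatrix (hK : 1 ≤ K) (j : Fin (K + 1)) : nsq (col (tightMatrix K) j) = 1 := by
  rcases eq_or_ne j 0 with rfl | hj
  · rw [col_tightMatrix_zero, nsq_tightColumn hK]
  · rw [tightMatrix, col_updateCol_of_ne _ hj, col_one, nsq_single, one_pow]

theorem tightMatrix_mulVec_tightSignal :
    (tightMatrix K).mulVec (tightSignal K) = tightSignal K := by
  have tightSignal_zero : tightSignal K 0 = 0 := Fin.cons_zero _ _
  rw [tightMatrix, updateCol_mulVec_of_eq_zero _ _ tightSignal_zero, Matrix.one_mulVec]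

theorem one_div_sqrt_mul_nsq_div_enorm_tightSignal (hK : 1 ≤ K) :
    1 / Real.sqrt K * nsq (tightSignal K) / _root_.enorm (tightSignal K) = 1 := by
  have sqrt_K_ne_zero : Real.sqrt K ≠ 0 := by positivity
  rw [mul_div_assoc, nsq_div_enorm, _root_.enorm, nsq_tightSignal,
    one_div_mul_cancel sqrt_K_ne_zero]

end TightExample

/-- tightness example for the bound of Lemma 4 of the paper. -/
theorem stmt5 (K : ℕ) (hK : 1 ≤ K)
    (x : Fin (K + 1) → ℝ) (hx : x = fun i => if i = 0 then 0 else 1)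
    (A : Matrix (Fin (K + 1)) (Fin (K + 1)) ℝ)
    (hA : A = fun i j =>
      if j = 0 then (if i = 0 then Real.sqrt (((K : ℝ) - 1) / K) else 1 / K)
      else if i = j then 1 else 0) :
    (∀ j, nsq (col A j) = 1) ∧
    A.mulVec x = x ∧
    |dot (A.mulVec x) (col A 0)| = 1 ∧
    (1 : ℝ) = (1 / Real.sqrt K) * nsq (A.mulVec x) / _root_.enorm x ∧
    (∀ j, j ∉ vsupp x →
      |dot (A.mulVec x) (col A j)| / _root_.enorm (projPerp A ∅ (col A j)) ≤
        (1 / Real.sqrt K) * nsq (A.mulVec x) / _root_.enorm x) ∧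
    (∃ j, j ∉ vsupp x ∧
      |dot (A.mulVec x) (col A j)| / _root_.enorm (projPerp A ∅ (col A j)) =
        (1 / Real.sqrt K) * nsq (A.mulVec x) / _root_.enorm x) := by
  obtain rfl : x = tightSignal K := hx.trans (funext fun i => (tightSignal_apply i).symm)
  obtain rfl : A = tightMatrix K :=
    hA.trans (Matrix.ext fun i j => (tightMatrix_apply i j).symm)
  have unit_columns := nsq_col_tightMatrix hK
  have bound_eq_one := one_div_sqrt_mul_nsq_div_enorm_tightSignal hK
  have correlation_eq_one : |dot (tightSignal K) (col (tightMatrix K) 0)| = 1 := by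
    rw [col_tightMatrix_zero, dot_tightSignal_tightColumn hK, abs_one]
  have quotient_eq_one := (abs_dot_div_enorm_projPerp_empty (tightMatrix K) (tightSignal K)
    (unit_columns 0)).trans correlation_eq_one
  rw [tightMatrix_mulVec_tightSignal, bound_eq_one]
  refine ⟨unit_columns, rfl, correlation_eq_one, rfl, fun j hj => ?_,
    0, notMem_vsupp_tightSignal.mpr rfl, quotient_eq_one⟩
  obtain rfl := notMem_vsupp_tightSignal.mp hj
  exact quotient_eq_one.le
end
end
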